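/- Fix an integer d ≥ 1, let x ∈ 𝒳_d, and let y, z ∈ 𝒴_d(x). Then xy and xz are conjugate in G if and only if they are conjugate in the centralizer C_G(x); moreover, if h ∈ G satisfies h⁻¹(xy)h = xz, then h ∈ C_G(x) and h⁻¹ y h = z. -/

import Mathlib

open Polynomial

/-- For `g ∈ GL(V)` with `n = dim V`, the subspace `V_g = range((g - 1)^n)`. -/
noncomputable def primaryRange {F V : Type} [Field F] [AddCommGroup V] [Module F V]
    (g : (Module.End F V)ˣ) : Submodule F V :=
  LinearMap.range (((g : Module.End F V) - 1) ^ Module.finrank F V)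

/-- For `g ∈ GL(V)` with `n = dim V`, the subspace `V_g⁰ = ker((g - 1)^n)`. -/
noncomputable def primaryKer {F V : Type} [Field F] [AddCommGroup V] [Module F V]
    (g : (Module.End F V)ˣ) : Submodule F V :=
  LinearMap.ker (((g : Module.End F V) - 1) ^ Module.finrank F V)

/-- The set `𝒳_d` of `d`-elements of `GL(V)`: those `g` fixing `V_g⁰` pointwise such
that every monic irreducible factor of the characteristic polynomial of `g` other
than `X - 1` has degree divisible by `d`. -/
noncomputable def dElements (F V : Type) [Field F] [AddCommGroup V] [Module F V]
    [FiniteDimensional F V] (d : ℕ) : Set (Module.End F V)ˣ :=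
  {g | (∀ v ∈ primaryKer g, (g : Module.End F V) v = v) ∧
    ∀ f : Polynomial F, f.Monic → Irreducible f →
      f ∣ LinearMap.charpoly (g : Module.End F V) → f ≠ X - 1 → d ∣ f.natDegree}

/-- For `x ∈ 𝒳_d`, the set `𝒴_d(x)`: those `y ∈ GL(V)` fixing `V_x` pointwise,
mapping `V_x⁰` into itself, and such that every monic irreducible factor of the
characteristic polynomial of `y` other than `X - 1` has degree not divisible by `d`. -/
noncomputable def dRegular (F V : Type) [Field F] [AddCommGroup V] [Module F V]
    [FiniteDimensional F V] (d : ℕ) (x : (Module.End F V)ˣ) :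
    Set (Module.End F V)ˣ :=
  {y | (∀ v ∈ primaryRange x, (y : Module.End F V) v = v) ∧
    (∀ v ∈ primaryKer x, (y : Module.End F V) v ∈ primaryKer x) ∧
    ∀ f : Polynomial F, f.Monic → Irreducible f →
      f ∣ LinearMap.charpoly (y : Module.End F V) → f ≠ X - 1 → ¬ d ∣ f.natDegree}

/-! On `V_x` the element `xy` acts as `x`, and on `V_x⁰` it acts as `y`. Let `p` be the part of
the characteristic polynomial of `x` prime to `X - 1`; then `p(x)` vanishes on `V_x`, and the
degree conditions make `p` coprime to the characteristic polynomials of `y` and `z`. By the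
Chinese remainder theorem there is a polynomial `r` with `r ≡ X` modulo `p` and `r ≡ 1` modulo
those two characteristic polynomials, so `r(xy) = x = r(xz)`. Hence whatever conjugates `xz` to
`xy` conjugates `x` to `x`. -/

section Polynomials

theorem exists_dvd_sub_and_dvd_sub_of_isCoprime {R : Type*} [CommRing R] {p q : R}
    (hpq : IsCoprime p q) (a b : R) : ∃ r, p ∣ r - a ∧ q ∣ r - b := by
  obtain ⟨u, v, huv⟩ := hpq
  refine ⟨a * (v * q) + b * (u * p), ⟨(b - a) * u, ?_⟩, ⟨(a - b) * v, ?_⟩⟩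
  · linear_combination a * huv
  · linear_combination b * huv

theorem isCoprime_of_forall_monic_irreducible_dvd {K : Type*} [Field K] {p q : K[X]} (hq : q ≠ 0)
    (h : ∀ f : K[X], f.Monic → Irreducible f → f ∣ p → ¬ f ∣ q) : IsCoprime p q := by
  classical
  refine isCoprime_of_irreducible_dvd (fun h0 => hq h0.2) fun f hf hfp hfq => ?_
  have hassoc : Associated (normalize f) f := normalize_associated f
  exact h _ (monic_normalize hf.ne_zero) (hassoc.symm.irreducible hf)
    (hassoc.dvd.trans hfp) (hassoc.dvd.trans hfq)

end Polynomials

section PolynomialsInEndomorphisms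

variable {R M N : Type*}

theorem comp_aeval_eq_aeval_comp [CommSemiring R] [AddCommMonoid M] [Module R M]
    [AddCommMonoid N] [Module R N] {f : M →ₗ[R] N} {S : Module.End R M} {T : Module.End R N}
    (h : T ∘ₗ f = f ∘ₗ S) (p : R[X]) : aeval T p ∘ₗ f = f ∘ₗ aeval S p := by
  induction p using Polynomial.induction_on' with
  | add p q hp hq => simp only [map_add, LinearMap.add_comp, LinearMap.comp_add, hp, hq]
  | monomial n a =>
    simp only [aeval_monomial, ← Algebra.smul_def, LinearMap.smul_comp, LinearMap.comp_smul,
      Module.End.commute_pow_left_of_commute h n]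

theorem aeval_apply_eq_of_eqOn [CommSemiring R] [AddCommMonoid M] [Module R M]
    {S T : Module.End R M} {W : Submodule R M} (hS : ∀ v ∈ W, S v ∈ W)
    (hTS : ∀ v ∈ W, T v = S v) (p : R[X]) {v : M} (hv : v ∈ W) :
    aeval T p v = aeval S p v := by
  have hS' : S ∘ₗ W.subtype = W.subtype ∘ₗ S.restrict hS := rfl
  have hT' : T ∘ₗ W.subtype = W.subtype ∘ₗ S.restrict hS := LinearMap.ext fun w => hTS w w.2
  exact LinearMap.congr_fun
    ((comp_aeval_eq_aeval_comp hT' p).trans (comp_aeval_eq_aeval_comp hS' p).symm) ⟨v, hv⟩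

variable [CommRing R] [AddCommGroup M] [Module R M]

theorem aeval_apply_eq_of_dvd_sub {T : Module.End R M} {p q r : R[X]} (hp : p ∣ q - r) {v : M}
    (hv : aeval T p v = 0) : aeval T q v = aeval T r v := by
  obtain ⟨s, hs⟩ := hp
  rw [← sub_eq_zero, ← LinearMap.sub_apply, ← map_sub, hs, mul_comm, map_mul,
    Module.End.mul_apply, hv, map_zero]

theorem aeval_mul_eq_left_of_codisjoint {S T : Module.End R M} {W K : Submodule R M}
    (hWK : Codisjoint W K) (hSW : ∀ v ∈ W, S v ∈ W) (hSK : ∀ v ∈ K, S v = v)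
    (hTW : ∀ v ∈ W, T v = v) (hTK : ∀ v ∈ K, T v ∈ K) {p q r : R[X]}
    (hpW : ∀ v ∈ W, aeval S p v = 0) (hqK : ∀ v ∈ K, aeval T q v = 0)
    (hpr : p ∣ r - X) (hqr : q ∣ r - 1) : aeval (S * T) r = S := by
  refine LinearMap.ext_on_codisjoint hWK (fun v hv => ?_) fun v hv => ?_
  · calc aeval (S * T) r v = aeval S r v :=
          aeval_apply_eq_of_eqOn hSW (fun w hw => by rw [Module.End.mul_apply, hTW w hw]) r hv
      _ = aeval S X v := aeval_apply_eq_of_dvd_sub hpr (hpW v hv)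
      _ = S v := by rw [aeval_X]
  · calc aeval (S * T) r v = aeval T r v :=
          aeval_apply_eq_of_eqOn hTK (fun w hw => hSK _ (hTK w hw)) r hv
      _ = aeval T 1 v := aeval_apply_eq_of_dvd_sub hqr (hqK v hv)
      _ = S v := by rw [map_one, Module.End.one_apply, hSK v hv]

theorem exists_dvd_charpoly_aeval_mul_pow_finrank_eq_zero [Nontrivial R] [Module.Finite R M]
    [Module.Free R M] (T : Module.End R M) (μ : R) :
    ∃ p : R[X], p ∣ T.charpoly ∧ ¬ (X - C μ) ∣ p ∧
      aeval T p * (T - algebraMap R (Module.End R M) μ) ^ Module.finrank R M = 0 := by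
  obtain ⟨p, hp, hnd⟩ :=
    exists_eq_pow_rootMultiplicity_mul_and_not_dvd _ T.charpoly_monic.ne_zero μ
  refine ⟨p, Dvd.intro_left _ hp.symm, hnd, ?_⟩
  have hle : rootMultiplicity μ T.charpoly ≤ Module.finrank R M := by
    have hp0 : p ≠ 0 := by
      rintro rfl
      exact hnd (dvd_zero _)
    have hdeg := congrArg natDegree hp
    rw [((monic_X_sub_C μ).pow _).natDegree_mul' hp0, (monic_X_sub_C μ).natDegree_pow,
      natDegree_X_sub_C, mul_one, T.charpoly_natDegree] at hdeg
    exact hdeg ▸ Nat.le_add_right _ _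
  have hdvd : T.charpoly ∣ p * (X - C μ) ^ Module.finrank R M := by
    conv_lhs => rw [hp, mul_comm]
    exact mul_dvd_mul_left p (pow_dvd_pow _ hle)
  simpa using aeval_eq_zero_of_dvd_aeval_eq_zero hdvd T.aeval_self_charpoly

end PolynomialsInEndomorphisms

section PrimaryDecomposition

variable {F V : Type} [Field F] [AddCommGroup V] [Module F V]

theorem apply_mem_primaryRange (g : (Module.End F V)ˣ) {v : V} (hv : v ∈ primaryRange g) :
    (g : Module.End F V) v ∈ primaryRange g := by
  obtain ⟨w, rfl⟩ := hv
  have hcomm : Commute (g : Module.End F V) ((g - 1) ^ Module.finrank F V) :=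
    ((Commute.refl _).sub_right (Commute.one_right _)).pow_right _
  exact ⟨(g : Module.End F V) w, (LinearMap.congr_fun hcomm.eq w).symm⟩

variable [FiniteDimensional F V]

theorem codisjoint_primaryRange_primaryKer (g : (Module.End F V)ˣ) :
    Codisjoint (primaryRange g) (primaryKer g) := by
  have hdisj : Disjoint (primaryRange g) (primaryKer g) := by
    simpa [primaryRange, primaryKer, Module.End.genEigenrange_nat, Module.End.genEigenspace_nat]
      using Module.End.generalized_eigenvec_disjoint_range_ker (g : Module.End F V) 1
  exact codisjoint_iff.mpr <| Submodule.eq_top_of_disjoint _ _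
    (LinearMap.finrank_range_add_finrank_ker _).ge hdisj

theorem exists_dvd_charpoly_aeval_primaryRange_eq_zero (g : (Module.End F V)ˣ) :
    ∃ p : F[X], p ∣ LinearMap.charpoly (g : Module.End F V) ∧ ¬ (X - 1) ∣ p ∧
      ∀ v ∈ primaryRange g, aeval (g : Module.End F V) p v = 0 := by
  obtain ⟨p, hp, hnd, hzero⟩ :=
    exists_dvd_charpoly_aeval_mul_pow_finrank_eq_zero (g : Module.End F V) 1
  rw [map_one] at hnd hzero
  refine ⟨p, hp, hnd, ?_⟩
  rintro _ ⟨w, rfl⟩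
  exact LinearMap.congr_fun hzero w

end PrimaryDecomposition

section Conjugacy

variable {F V : Type} [Field F] [AddCommGroup V] [Module F V] [FiniteDimensional F V]
  {d : ℕ} {x y z : (Module.End F V)ˣ}

theorem isCoprime_charpoly_of_mem_dRegular (hx : x ∈ dElements F V d) (hy : y ∈ dRegular F V d x)
    {p : F[X]} (hp : p ∣ LinearMap.charpoly (x : Module.End F V)) (hpX : ¬ (X - 1) ∣ p) :
    IsCoprime p (LinearMap.charpoly (y : Module.End F V)) := by
  refine isCoprime_of_forall_monic_irreducible_dvd (LinearMap.charpoly_monic _).ne_zero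
    fun f hmonic hirr hfp hfy => ?_
  have hne : f ≠ X - 1 := fun h => hpX (h ▸ hfp)
  exact hy.2.2 f hmonic hirr hfy hne (hx.2 f hmonic hirr (hfp.trans hp) hne)

theorem exists_aeval_mul_eq_and_aeval_mul_eq (hx : x ∈ dElements F V d)
    (hy : y ∈ dRegular F V d x) (hz : z ∈ dRegular F V d x) :
    ∃ r : F[X], aeval (x * y : Module.End F V) r = x ∧ aeval (x * z : Module.End F V) r = x := by
  obtain ⟨p, hpx, hpX, hpW⟩ := exists_dvd_charpoly_aeval_primaryRange_eq_zero x
  obtain ⟨r, hpr, hqr⟩ := exists_dvd_sub_and_dvd_sub_of_isCoprime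
    ((isCoprime_charpoly_of_mem_dRegular hx hy hpx hpX).mul_right
      (isCoprime_charpoly_of_mem_dRegular hx hz hpx hpX)) X 1
  have aeval_eq : ∀ w ∈ dRegular F V d x, LinearMap.charpoly (w : Module.End F V) ∣ r - 1 →
      aeval (x * w : Module.End F V) r = x := fun w hw hwr =>
    aeval_mul_eq_left_of_codisjoint (codisjoint_primaryRange_primaryKer x)
      (fun _ => apply_mem_primaryRange x) hx.1 hw.1 hw.2.1 hpW
      (fun v _ => LinearMap.congr_fun (LinearMap.aeval_self_charpoly _) v) hpr hwr
  exact ⟨r, aeval_eq y hy (dvd_of_mul_right_dvd hqr), aeval_eq z hz (dvd_of_mul_left_dvd hqr)⟩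

theorem commute_of_semiconjBy_mul (hx : x ∈ dElements F V d) (hy : y ∈ dRegular F V d x)
    (hz : z ∈ dRegular F V d x) {h : Module.End F V} (hh : SemiconjBy h (x * z) (x * y)) :
    Commute h x := by
  obtain ⟨r, hry, hrz⟩ := exists_aeval_mul_eq_and_aeval_mul_eq hx hy hz
  have hr := comp_aeval_eq_aeval_comp hh.eq.symm r
  rw [hry, hrz] at hr
  exact hr.symm

theorem conj_in_G_iff_conj_in_centralizer_general (hx : x ∈ dElements F V d)
    (hy : y ∈ dRegular F V d x) (hz : z ∈ dRegular F V d x) :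
    ((∃ h : (Module.End F V)ˣ, h⁻¹ * (x * y) * h = x * z) ↔
      ∃ h ∈ Subgroup.centralizer ({x} : Set (Module.End F V)ˣ),
        h⁻¹ * (x * y) * h = x * z) ∧
    ∀ h : (Module.End F V)ˣ, h⁻¹ * (x * y) * h = x * z →
      h * x = x * h ∧ h⁻¹ * y * h = z := by
  have hconj : ∀ h : (Module.End F V)ˣ, h⁻¹ * (x * y) * h = x * z →
      h * x = x * h ∧ h⁻¹ * y * h = z := by
    intro h hh
    have hsemi : SemiconjBy h (x * z) (x * y) := by
      rw [SemiconjBy, ← hh, mul_assoc, mul_inv_cancel_left]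
    have hcomm : Commute h x :=
      Commute.units_val_iff.mp (commute_of_semiconjBy_mul hx hy hz (by
        simpa using hsemi.map (Units.coeHom (Module.End F V))))
    have hzy : SemiconjBy h z y := by
      simpa using SemiconjBy.mul_right hcomm.inv_right hsemi
    exact ⟨hcomm, by rw [mul_assoc, ← hzy.eq, inv_mul_cancel_left]⟩
  refine ⟨⟨fun ⟨h, hh⟩ => ⟨h, ?_, hh⟩, fun ⟨h, _, hh⟩ => ⟨h, hh⟩⟩, hconj⟩
  exact Subgroup.mem_centralizer_singleton_iff.mpr (hconj h hh).1

end Conjugacy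

/-- For `d ≥ 1`, `x ∈ 𝒳_d` and `y, z ∈ 𝒴_d(x)`: `xy` and `xz`
are conjugate in `G = GL(V)` if and only if they are conjugate in `C_G(x)`;
moreover any `h ∈ G` with `h⁻¹(xy)h = xz` satisfies `h ∈ C_G(x)` and `h⁻¹ y h = z`. -/
theorem conj_in_G_iff_conj_in_centralizer
    (F V : Type) [Field F] [Fintype F] [AddCommGroup V] [Module F V]
    [FiniteDimensional F V] (hn : 1 ≤ Module.finrank F V)
    (d : ℕ) (hd : 1 ≤ d)
    (x : (Module.End F V)ˣ) (hx : x ∈ dElements F V d)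
    (y z : (Module.End F V)ˣ)
    (hy : y ∈ dRegular F V d x) (hz : z ∈ dRegular F V d x) :
    ((∃ h : (Module.End F V)ˣ, h⁻¹ * (x * y) * h = x * z) ↔
      ∃ h ∈ Subgroup.centralizer ({x} : Set (Module.End F V)ˣ),
        h⁻¹ * (x * y) * h = x * z) ∧
    ∀ h : (Module.End F V)ˣ, h⁻¹ * (x * y) * h = x * z →
      h * x = x * h ∧ h⁻¹ * y * h = z :=
  conj_in_G_iff_conj_in_centralizer_general hx hy hz
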